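/- Let λ : ℤ₊ → ℝ satisfy (UB), let γ ≥ 0 and N ≥ 1, and write Δ_N = (0,1,…,N−1) ∈ W^N. Then the inhomogeneous Plancherel measures are consistent with the links of the inhomogeneous Gelfand–Tsetlin graph: for every y ∈ W^N, Σ_{x ∈ W^{N+1}} 𝔓_γ^{N+1}(Δ_{N+1}, x) · 𝔏_N^{N+1}(x, y) = 𝔓_γ^N(Δ_N, y), the series converging absolutely. -/

import Mathlib

open Complex MeasureTheory Finset
open scoped Real ComplexOrder

/-- ψ_x(w) = ∏_{k=0}^{x} λ(k)/(λ(k)−w). -/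
noncomputable def psiF (lam : ℕ → ℝ) (x : ℕ) (w : ℂ) : ℂ :=
  ∏ k ∈ Finset.range (x + 1), (lam k : ℂ) / ((lam k : ℂ) - w)

/-- p_x(w) = ∏_{k=0}^{x−1} (λ(k)−w)/λ(k). -/
noncomputable def pF (lam : ℕ → ℝ) (x : ℕ) (w : ℂ) : ℂ :=
  ∏ k ∈ Finset.range x, (((lam k : ℂ) - w) / (lam k : ℂ))

/-- e^{tL}(x,y) := −(1/λ(y))·(1/(2πi)) ∮_{|w|=R} ψ_y(w) p_x(w) e^{−tw} dw,
the contour being the counterclockwise circle of radius R centred at 0. -/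
noncomputable def eL (lam : ℕ → ℝ) (R t : ℝ) (x y : ℕ) : ℂ :=
  -(1 / (lam y : ℂ)) * ((2 * (Real.pi : ℂ) * Complex.I)⁻¹ *
    ∮ w in C(0, R), psiF lam y w * pF lam x w * Complex.exp (-(t : ℂ) * w))

/-- y ≺ x : interlacing, x_1 ≤ y_1 < x_2 ≤ y_2 < ⋯ ≤ y_N < x_{N+1}.
(Membership of (y,x) in W^{N,N+1} is exactly this condition.) -/
def Interlace {N : ℕ} (y : Fin N → ℕ) (x : Fin (N + 1) → ℕ) : Prop :=
  ∀ i : Fin N, x i.castSucc ≤ y i ∧ y i < x i.succ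

instance {N : ℕ} (y : Fin N → ℕ) (x : Fin (N + 1) → ℕ) : Decidable (Interlace y x) :=
  inferInstanceAs (Decidable (∀ i : Fin N, x i.castSucc ≤ y i ∧ y i < x i.succ))

/-- 𝔥_N, defined recursively: 𝔥_1 ≡ 1 and 𝔥_{N+1}(x) = Σ_{y ≺ x} ∏ λ(y_i)⁻¹ 𝔥_N(y)
(so 𝔥_1(x) = 1 since the empty interlacing condition is vacuous and the unique
y : Fin 0 → ℕ contributes the empty product). -/
noncomputable def hfun (lam : ℕ → ℝ) : (N : ℕ) → (Fin N → ℕ) → ℝ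
  | 0, _ => 1
  | (N + 1), x => ∑' y : { y : Fin N → ℕ // Interlace y x },
      (∏ i, (lam (y.1 i))⁻¹) * hfun lam N y.1

/-- 𝔓_t^N(x,y) = (𝔥_N(y)/𝔥_N(x)) det(e^{tL}(x_i,y_j))_{i,j=1}^N. -/
noncomputable def frakP (lam : ℕ → ℝ) (R t : ℝ) (N : ℕ) (x y : Fin N → ℕ) : ℂ :=
  ((hfun lam N y / hfun lam N x : ℝ) : ℂ) *
    (Matrix.of fun i j => eL lam R t (x i) (y j)).det

/-- 𝔏_N^{N+1}(x,y) = (𝔥_N(y)/𝔥_{N+1}(x)) ∏ λ(y_i)⁻¹ 1(y ≺ x). -/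
noncomputable def frakL (lam : ℕ → ℝ) (N : ℕ) (x : Fin (N + 1) → ℕ) (y : Fin N → ℕ) : ℝ :=
  (hfun lam N y / hfun lam (N + 1) x) * (∏ i, (lam (y i))⁻¹) *
    (if Interlace y x then 1 else 0)

section CircleIntegrals

variable {lam : ℕ → ℝ} {M R : ℝ}

lemma coe_sub_ne_zero_of_lt_norm {a : ℝ} {w : ℂ} (ha : 0 < a) (haw : a < ‖w‖) :
    (a : ℂ) - w ≠ 0 := by
  intro h
  rw [← sub_eq_zero.mp h, Complex.norm_real, Real.norm_of_nonneg ha.le] at haw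
  exact lt_irrefl _ haw

@[fun_prop]
lemma differentiable_pF (lam : ℕ → ℝ) (x : ℕ) : Differentiable ℂ (pF lam x) := by
  unfold pF
  fun_prop

lemma differentiableAt_prod_div_sub (hpos : ∀ k, 0 < lam k) (hub : ∀ k, lam k ≤ M) (n : ℕ)
    {w : ℂ} (hw : M < ‖w‖) :
    DifferentiableAt ℂ (fun w => ∏ k ∈ range n, (lam k : ℂ) / ((lam k : ℂ) - w)) w := by
  refine DifferentiableAt.fun_finsetProd fun k _ => ?_
  exact (differentiableAt_const _).div (by fun_prop)
    (coe_sub_ne_zero_of_lt_norm (hpos k) ((hub k).trans_lt hw))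

/-- The contour radius in `eL` can be enlarged. -/
lemma eL_eq_of_le (hpos : ∀ k, 0 < lam k) (hub : ∀ k, lam k ≤ M) (hMR : M < R) {R' : ℝ}
    (hR : R ≤ R') (t : ℝ) (x y : ℕ) : eL lam R t x y = eL lam R' t x y := by
  have hR0 : 0 < R := (hpos 0).trans_le ((hub 0).trans hMR.le)
  have hd : ∀ w : ℂ, M < ‖w‖ → DifferentiableAt ℂ
      (fun w => psiF lam y w * pF lam x w * Complex.exp (-(t : ℂ) * w)) w := by
    intro w hw
    have h := differentiableAt_prod_div_sub hpos hub (y + 1) hw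
    exact (h.mul (differentiable_pF lam x w)).mul (by fun_prop)
  unfold eL
  rw [Complex.circleIntegral_eq_of_differentiable_on_annulus_off_countable hR0 hR
    Set.countable_empty (fun w hw => (hd w ?_).continuousAt.continuousWithinAt)
    (fun w hw => hd w ?_)]
  · have := hw.2
    simp only [Metric.mem_ball, dist_zero_right, not_lt] at this
    linarith
  · have := hw.1.2
    simp only [Metric.mem_closedBall, dist_zero_right, not_le] at this
    linarith

/-- The contour-integral form of the tail `∑_{y ≥ n} e^{tL}(x, y)`. -/
noncomputable def eLTail (lam : ℕ → ℝ) (R t : ℝ) (x n : ℕ) : ℂ :=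
  (2 * (Real.pi : ℂ) * Complex.I)⁻¹ * ∮ w in C(0, R),
    w⁻¹ * ((∏ k ∈ range n, (lam k : ℂ) / ((lam k : ℂ) - w)) *
      (pF lam x w * Complex.exp (-(t : ℂ) * w)))

lemma circleIntegrable_eLTail (hpos : ∀ k, 0 < lam k) (hub : ∀ k, lam k ≤ M) (hMR : M < R)
    (t : ℝ) (x n : ℕ) : CircleIntegrable (fun w => w⁻¹ *
      ((∏ k ∈ range n, (lam k : ℂ) / ((lam k : ℂ) - w)) *
        (pF lam x w * Complex.exp (-(t : ℂ) * w)))) 0 R := by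
  have hR0 : 0 < R := (hpos 0).trans_le ((hub 0).trans hMR.le)
  refine ContinuousOn.circleIntegrable hR0.le fun w hw => ?_
  have hw' : ‖w‖ = R := by simpa using hw
  have hw0 : w ≠ 0 := norm_pos_iff.mp (hw' ▸ hR0)
  have h := differentiableAt_prod_div_sub hpos hub n (hw' ▸ hMR)
  exact ((differentiableAt_inv hw0).mul (h.mul
    ((differentiable_pF lam x w).mul (by fun_prop)))).continuousAt.continuousWithinAt

lemma eLTail_zero (hR : 0 < R) (hpos : ∀ k, 0 < lam k) (t : ℝ) (x : ℕ) :
    eLTail lam R t x 0 = 1 := by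
  have hd : Differentiable ℂ fun w : ℂ => pF lam x w * Complex.exp (-(t : ℂ) * w) := by
    fun_prop
  have h := hd.diffContOnCl.two_pi_i_inv_smul_circleIntegral_sub_inv_smul
    (Metric.mem_ball_self (x := (0 : ℂ)) hR)
  have hp : pF lam x 0 = 1 := by
    refine prod_eq_one fun k _ => ?_
    rw [sub_zero, div_self (by exact_mod_cast (hpos k).ne')]
  simpa [eLTail, hp] using h

lemma eLTail_sub_succ (hpos : ∀ k, 0 < lam k) (hub : ∀ k, lam k ≤ M) (hMR : M < R)
    (t : ℝ) (x n : ℕ) :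
    eLTail lam R t x n - eLTail lam R t x (n + 1) = eL lam R t x n := by
  have hR0 : 0 < R := (hpos 0).trans_le ((hub 0).trans hMR.le)
  unfold eLTail eL
  rw [← mul_sub, ← circleIntegral.integral_sub (circleIntegrable_eLTail hpos hub hMR t x n)
    (circleIntegrable_eLTail hpos hub hMR t x (n + 1)), mul_left_comm (-(1 / (lam n : ℂ))),
    ← circleIntegral.integral_const_mul (-(1 / (lam n : ℂ)))]
  congr 1
  refine circleIntegral.integral_congr hR0.le fun w hw => ?_
  have hw' : ‖w‖ = R := by simpa using hw
  have hw0 : w ≠ 0 := norm_pos_iff.mp (hw' ▸ hR0)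
  have h := coe_sub_ne_zero_of_lt_norm (w := w) (hpos n) (by linarith [hub n])
  have hl : (lam n : ℂ) ≠ 0 := by exact_mod_cast (hpos n).ne'
  simp only [psiF, prod_range_succ]
  field_simp
  ring

lemma sum_range_eL (hpos : ∀ k, 0 < lam k) (hub : ∀ k, lam k ≤ M) (hMR : M < R)
    (t : ℝ) (x n : ℕ) : ∑ k ∈ range n, eL lam R t x k = 1 - eLTail lam R t x n := by
  simp_rw [← eLTail_sub_succ hpos hub hMR]
  rw [sum_range_sub', eLTail_zero ((hpos 0).trans_le ((hub 0).trans hMR.le)) hpos]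

lemma eLTail_sub_succ_left (hpos : ∀ k, 0 < lam k) (hub : ∀ k, lam k ≤ M) (hMR : M < R)
    (t : ℝ) (x n : ℕ) :
    eLTail lam R t x (n + 1) - eLTail lam R t (x + 1) (n + 1) =
      -((lam n : ℂ) * ((lam x : ℂ)⁻¹ * eL lam R t x n)) := by
  have hR0 : 0 < R := (hpos 0).trans_le ((hub 0).trans hMR.le)
  have hl : (lam n : ℂ) ≠ 0 := by exact_mod_cast (hpos n).ne'
  have hx : (lam x : ℂ) ≠ 0 := by exact_mod_cast (hpos x).ne'
  have hrhs : -((lam n : ℂ) * ((lam x : ℂ)⁻¹ * eL lam R t x n)) =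
      (2 * (Real.pi : ℂ) * Complex.I)⁻¹ * ((lam x : ℂ)⁻¹ *
        ∮ w in C(0, R), psiF lam n w * pF lam x w * Complex.exp (-(t : ℂ) * w)) := by
    unfold eL
    generalize (∮ w in C(0, R), psiF lam n w * pF lam x w * Complex.exp (-(t : ℂ) * w)) = J
    field_simp
  rw [hrhs]
  unfold eLTail
  rw [← mul_sub, ← circleIntegral.integral_sub (circleIntegrable_eLTail hpos hub hMR t x (n + 1))
    (circleIntegrable_eLTail hpos hub hMR t (x + 1) (n + 1)),
    ← circleIntegral.integral_const_mul ((lam x : ℂ)⁻¹)]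
  congr 1
  refine circleIntegral.integral_congr hR0.le fun w hw => ?_
  have hw' : ‖w‖ = R := by simpa using hw
  have hw0 : w ≠ 0 := norm_pos_iff.mp (hw' ▸ hR0)
  have hp : pF lam (x + 1) w = pF lam x w * (((lam x : ℂ) - w) / (lam x : ℂ)) :=
    prod_range_succ _ _
  simp only [psiF, hp]
  generalize (∏ k ∈ range (n + 1), (lam k : ℂ) / ((lam k : ℂ) - w)) = P
  field_simp
  ring

lemma norm_prod_div_sub_le (hpos : ∀ k, 0 < lam k) (hub : ∀ k, lam k ≤ M) {w : ℂ}
    (hw : 3 * M ≤ ‖w‖) (n : ℕ) :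
    ‖∏ k ∈ range n, (lam k : ℂ) / ((lam k : ℂ) - w)‖ ≤ (1 / 2) ^ n := by
  rw [norm_prod]
  refine (prod_le_prod (fun _ _ => norm_nonneg _) fun k _ => ?_).trans_eq
    (by rw [prod_const, card_range])
  have hk : ‖(lam k : ℂ)‖ = lam k := by
    rw [Complex.norm_real, Real.norm_of_nonneg (hpos k).le]
  have h1 : ‖w‖ - ‖(lam k : ℂ)‖ ≤ ‖(lam k : ℂ) - w‖ := by
    rw [norm_sub_rev]; exact norm_sub_norm_le _ _
  have h2 := hpos k
  have h3 := hub k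
  rw [norm_div, div_le_div_iff₀ (by linarith) two_pos]
  linarith

lemma exists_norm_eLTail_le (hpos : ∀ k, 0 < lam k) (hub : ∀ k, lam k ≤ M) (hMR : 3 * M ≤ R)
    (t : ℝ) (x : ℕ) : ∃ C : ℝ, ∀ n, ‖eLTail lam R t x n‖ ≤ C * (1 / 2) ^ n := by
  have hM : 0 < M := (hpos 0).trans_le (hub 0)
  have hR0 : 0 < R := by linarith
  have hc : ContinuousOn (fun w : ℂ => w⁻¹ * (pF lam x w * Complex.exp (-(t : ℂ) * w)))
      (Metric.sphere 0 R) := by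
    refine (continuousOn_inv₀.mono fun w hw => ?_).mul
      (Continuous.continuousOn (((differentiable_pF lam x).continuous).mul (by fun_prop)))
    exact norm_pos_iff.mp ((by simpa using hw : ‖w‖ = R) ▸ hR0)
  obtain ⟨C, hC⟩ := (isCompact_sphere (0 : ℂ) R).exists_bound_of_continuousOn hc
  refine ⟨R * C, fun n => ?_⟩
  rw [mul_assoc]
  refine circleIntegral.norm_two_pi_i_inv_smul_integral_le_of_norm_le_const hR0.le fun w hw => ?_
  have hw' : ‖w‖ = R := by simpa using hw
  rw [mul_left_comm, norm_mul, mul_comm C]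
  exact mul_le_mul (norm_prod_div_sub_le hpos hub (hw' ▸ hMR) n) (hC w hw) (norm_nonneg _)
    (by positivity)

lemma hasSum_eL (hpos : ∀ k, 0 < lam k) (hub : ∀ k, lam k ≤ M) (hMR : 3 * M ≤ R)
    (t : ℝ) (x : ℕ) : HasSum (eL lam R t x) 1 := by
  have hM : 0 < M := (hpos 0).trans_le (hub 0)
  have hsub := eLTail_sub_succ hpos hub (R := R) (by linarith) t x
  obtain ⟨C, hC⟩ := exists_norm_eLTail_le hpos hub hMR t x
  have hgeom : Summable fun n : ℕ => C * (1 / 2 : ℝ) ^ n := summable_geometric_two.mul_left C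
  have htail : Summable (eLTail lam R t x) := hgeom.of_norm_bounded hC
  have hs : Summable (eL lam R t x) :=
    (htail.sub ((summable_nat_add_iff 1).mpr htail)).congr hsub
  rw [hs.hasSum_iff_tendsto_nat]
  simp_rw [sum_range_eL hpos hub (by linarith : M < R)]
  simpa using htail.tendsto_atTop_zero.const_sub 1

end CircleIntegrals

section Determinants

lemma hasSum_pi_prod {n : ℕ} {ι : Type*} {f : Fin n → ι → ℂ} {a : Fin n → ℂ}
    (hf : ∀ j, HasSum (f j) (a j)) :
    HasSum (fun x : Fin n → ι => ∏ j, f j (x j)) (∏ j, a j) := by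
  induction n with
  | zero => simp
  | succ n ih =>
    have ht : HasSum (fun x : Fin n → ι => ∏ j, f (Fin.succ j) (x j)) (∏ j, a (Fin.succ j)) :=
      ih fun j => hf j.succ
    have h0 := hf 0
    have hsum : Summable fun p : ι × (Fin n → ι) => f 0 p.1 * ∏ j, f (Fin.succ j) (p.2 j) :=
      summable_mul_of_summable_norm (f := f 0)
        (g := fun x : Fin n → ι => ∏ j, f (Fin.succ j) (x j)) h0.summable.norm ht.summable.norm
    have h := h0.mul ht hsum
    rw [← Fin.prod_univ_succ] at h
    refine (Fin.consEquiv fun _ : Fin (n + 1) => ι).hasSum_iff.mp ?_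
    have hcomp : (fun x : Fin (n + 1) → ι => ∏ j, f j (x j)) ∘
        (Fin.consEquiv fun _ : Fin (n + 1) => ι) =
        fun p => f 0 p.1 * ∏ j, f (Fin.succ j) (p.2 j) := by
      funext p
      simp [Fin.prod_univ_succ, Fin.consEquiv]
    rwa [hcomp]

lemma hasSum_det {n : ℕ} {ι : Type*} {A : Fin n → Fin n → ι → ℂ}
    {B : Matrix (Fin n) (Fin n) ℂ} (h : ∀ i j, HasSum (A i j) (B i j)) :
    HasSum (fun x : Fin n → ι => (Matrix.of fun i j => A i j (x j)).det) B.det := by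
  simp_rw [Matrix.det_apply]
  exact hasSum_sum fun σ _ => (hasSum_pi_prod fun j => h (σ j) j).const_smul _

end Determinants

section Interlacing

lemma Interlace.strictMono {N : ℕ} {y : Fin N → ℕ} {x : Fin (N + 1) → ℕ} (h : Interlace y x) :
    StrictMono x :=
  Fin.strictMono_iff_lt_succ.mpr fun i => (h i).1.trans_lt (h i).2

lemma Interlace.strictMono_left {N : ℕ} {y : Fin N → ℕ} {x : Fin (N + 1) → ℕ}
    (h : Interlace y x) : StrictMono y := by
  intro i j hij
  exact (h i).2.trans_le ((h.strictMono.monotone (by simpa [Fin.le_def] using hij)).trans (h j).1)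

instance finite_interlace {N : ℕ} (x : Fin (N + 1) → ℕ) :
    Finite { y : Fin N → ℕ // Interlace y x } :=
  ((Set.finite_Iic fun i : Fin N => x i.succ).subset fun _ hy i => (hy i).2.le).to_subtype

lemma hfun_pos {lam : ℕ → ℝ} (hpos : ∀ k, 0 < lam k) {N : ℕ} {x : Fin N → ℕ}
    (hx : StrictMono x) : 0 < hfun lam N x := by
  induction N with
  | zero => simp [hfun]
  | succ N ih =>
    have hterm : ∀ y : { y : Fin N → ℕ // Interlace y x },
        0 < (∏ i, (lam (y.1 i))⁻¹) * hfun lam N y.1 := fun y =>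
      mul_pos (prod_pos fun i _ => inv_pos.mpr (hpos _)) (ih y.2.strictMono_left)
    rw [hfun]
    exact (Summable.of_finite).tsum_pos (fun y => (hterm y).le)
      ⟨fun i => x i.castSucc, fun i => ⟨le_rfl, hx i.castSucc_lt_succ⟩⟩ (hterm _)

lemma hfun_succ_val (lam : ℕ → ℝ) (N : ℕ) :
    hfun lam (N + 1) (fun i => (i : ℕ)) =
      (∏ i : Fin N, (lam i)⁻¹) * hfun lam N (fun i => (i : ℕ)) := by
  rw [hfun, tsum_eq_single ⟨fun i : Fin N => (i : ℕ), fun i => by simp⟩]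
  intro y hy
  refine absurd (Subtype.ext (funext fun i => ?_)) hy
  have h := y.2 i
  simp only [Fin.val_castSucc, Fin.val_succ] at h
  exact le_antisymm (Nat.lt_succ_iff.mp h.2) h.1

/-- Summation of a determinant over all `x ≻ y`, computed column by column. -/
lemma hasSum_ite_interlace_det {N : ℕ} {y : Fin N → ℕ} (hy : StrictMono y)
    {f : Fin (N + 1) → ℕ → ℂ} {a : Fin (N + 1) → ℂ} (hf : ∀ i, HasSum (f i) (a i)) :
    HasSum (fun x : Fin (N + 1) → ℕ =>
        if Interlace y x then (Matrix.of fun i j => f i (x j)).det else 0)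
      (Matrix.of fun i j => Fin.snoc (α := fun _ => ℂ)
        (fun k => ∑ m ∈ range (y k + 1), f i m) (a i) j).det := by
  set G : Matrix (Fin (N + 1)) (Fin (N + 1)) ℂ := Matrix.of fun i j =>
    Fin.snoc (α := fun _ => ℂ) (fun k => ∑ m ∈ range (y k + 1), f i m) (a i) j with hG
  let V : Fin (N + 1) → ℕ → ℂ := fun j m => if ∀ k : Fin N, k.castSucc = j → m ≤ y k then 1 else 0
  let W : Fin (N + 1) → ℕ → ℂ := fun j m =>
    if (∀ k : Fin N, k.castSucc = j → m ≤ y k) ∧ ∀ k : Fin N, k.succ = j → y k < m then 1 else 0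
  have hV : ∀ i j, HasSum (fun m => V j m * f i m) (G i j) := by
    intro i j
    induction j using Fin.lastCases with
    | last => simpa [V, hG, Fin.castSucc_ne_last] using hf i
    | cast k =>
      have h : G i k.castSucc = ∑ m ∈ range (y k + 1), V k.castSucc m * f i m := by
        simp only [hG, Matrix.of_apply, Fin.snoc_castSucc]
        refine sum_congr rfl fun m hm => ?_
        have : m ≤ y k := by simpa [Nat.lt_succ_iff] using hm
        simp [V, this]
      rw [h]
      refine hasSum_sum_of_ne_finset_zero fun m hm => ?_
      have : ¬ m ≤ y k := by simpa [Nat.lt_succ_iff] using hm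
      simp [V, this]
  have hW0 : ∀ m, W 0 m = V 0 m := by
    intro m
    simp [W, V, Fin.succ_ne_zero]
  have hWs : ∀ (k : Fin N) m, W k.succ m = V k.succ m - V k.castSucc m := by
    intro k m
    simp only [W, V, Fin.castSucc_inj, Fin.succ_inj, forall_eq]
    by_cases hm : m ≤ y k
    · have h : ∀ l : Fin N, l.castSucc = k.succ → m ≤ y l := fun l hl =>
        hm.trans (hy (Fin.castSucc_lt_castSucc_iff.mp (hl ▸ k.castSucc_lt_succ))).le
      rw [if_neg (fun h' => (h'.2.trans_le hm).false), if_pos h, if_pos hm, sub_self]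
    · simp [hm, not_le.mp hm]
  let B : Matrix (Fin (N + 1)) (Fin (N + 1)) ℂ := Matrix.of fun i j =>
    Fin.cases (motive := fun _ => ℂ) (G i 0) (fun k => G i k.succ - G i k.castSucc) j
  have hB : ∀ i j, HasSum (fun m => W j m * f i m) (B i j) := by
    intro i j
    induction j using Fin.cases with
    | zero =>
      change HasSum _ (G i 0)
      simpa only [hW0] using hV i 0
    | succ k =>
      change HasSum _ (G i k.succ - G i k.castSucc)
      simpa only [hWs, sub_mul] using (hV i k.succ).sub (hV i k.castSucc)
  have hGB : G.det = B.det :=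
    Matrix.det_eq_of_forall_col_eq_smul_add_pred (fun _ => 1) (fun i => rfl)
      fun i j => by simp [B]
  rw [hGB]
  convert hasSum_det hB using 2 with x
  have hdet := Matrix.det_mul_row (fun j => W j (x j)) (Matrix.of fun i j => f i (x j))
  simp only [Matrix.of_apply] at hdet
  rw [hdet]
  have hprod : ∏ j, W j (x j) = if Interlace y x then 1 else 0 := by
    rw [prod_ite_zero, prod_const_one]
    congr 1
    simp only [Interlace, eq_iff_iff, mem_univ, forall_true_left]
    exact ⟨fun h k => ⟨(h _).1 k rfl, (h _).2 k rfl⟩, fun h j =>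
      ⟨fun k hk => hk ▸ (h k).1, fun k hk => hk ▸ (h k).2⟩⟩
  rw [hprod, ite_mul, one_mul, zero_mul]

lemma det_snoc_one {N : ℕ} (F : Fin (N + 1) → Fin N → ℂ) :
    (Matrix.of fun i j => Fin.snoc (α := fun _ => ℂ) (F i) 1 j).det =
      (Matrix.of fun i j => F i.castSucc j - F i.succ j).det := by
  let B : Matrix (Fin (N + 1)) (Fin (N + 1)) ℂ := Matrix.of fun i j =>
    Fin.cases (motive := fun _ => ℂ) (Fin.snoc (α := fun _ => ℂ) (F 0) 1 j)
      (fun k => Fin.snoc (α := fun _ => ℂ) (fun l => F k.succ l - F k.castSucc l) 0 j) i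
  trans B.det
  · refine Matrix.det_eq_of_forall_row_eq_smul_add_pred (fun _ => 1) (fun j => rfl) fun i j => ?_
    induction j using Fin.lastCases <;> simp [B]
  · rw [Matrix.det_succ_column B (Fin.last N), Fin.sum_univ_succ]
    have h : B.submatrix (Fin.succAbove 0) (Fin.last N).succAbove =
        -(Matrix.of fun i j => F i.castSucc j - F i.succ j) := by
      ext i j
      simp [B]
    rw [h, Matrix.det_neg]
    simp [B, ← mul_assoc, ← mul_pow]

end Interlacing

section Consistency

variable {lam : ℕ → ℝ} {M R : ℝ}

lemma hasSum_ite_interlace_det_eL (hpos : ∀ k, 0 < lam k) (hub : ∀ k, lam k ≤ M)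
    (hMR : M < R) (t : ℝ) {N : ℕ} {y : Fin N → ℕ} (hy : StrictMono y) :
    HasSum (fun x : Fin (N + 1) → ℕ => if Interlace y x then
        (Matrix.of fun i j : Fin (N + 1) => eL lam R t i (x j)).det else 0)
      ((∏ j, (lam (y j) : ℂ)) * ((∏ i : Fin N, (lam i : ℂ)⁻¹) *
        (Matrix.of fun i j : Fin N => eL lam R t i (y j)).det)) := by
  have hM : 0 < M := (hpos 0).trans_le (hub 0)
  have hR' : M < R + 3 * M := by linarith
  simp_rw [eL_eq_of_le hpos hub hMR (by linarith : R ≤ R + 3 * M)]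
  convert hasSum_ite_interlace_det hy
    (fun i : Fin (N + 1) => hasSum_eL hpos hub (by linarith : 3 * M ≤ R + 3 * M) t i) using 1
  simp_rw [sum_range_eL hpos hub hR']
  rw [det_snoc_one, ← Matrix.det_mul_column, ← Matrix.det_mul_row]
  congr 1
  ext i j
  have h := eLTail_sub_succ_left hpos hub hR' t i (y j)
  simp only [Matrix.of_apply, Fin.val_castSucc, Fin.val_succ]
  linear_combination h

end Consistency

/-- the inhomogeneous Plancherel measures are consistent with the links
of the inhomogeneous Gelfand–Tsetlin graph: with Δ_N = (0,1,…,N−1),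
Σ_{x ∈ W^{N+1}} 𝔓_γ^{N+1}(Δ_{N+1}, x) 𝔏_N^{N+1}(x,y) = 𝔓_γ^N(Δ_N, y),
the series converging absolutely. -/
theorem stmt_12 (lam : ℕ → ℝ) (s M : ℝ) (hs : 0 < s)
    (hlb : ∀ x, s ≤ lam x) (hub : ∀ x, lam x ≤ M)
    (R : ℝ) (hR : M < R) (γ : ℝ) (hγ : 0 ≤ γ) (N : ℕ) (hN : 1 ≤ N)
    (y : Fin N → ℕ) (hy : StrictMono y) :
    HasSum (fun x : { x : Fin (N + 1) → ℕ // StrictMono x } =>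
        frakP lam R γ (N + 1) (fun i => (i : ℕ)) x.1 * ((frakL lam N x.1 y : ℝ) : ℂ))
      (frakP lam R γ N (fun i => (i : ℕ)) y) ∧
    Summable (fun x : { x : Fin (N + 1) → ℕ // StrictMono x } =>
        ‖frakP lam R γ (N + 1) (fun i => (i : ℕ)) x.1 * ((frakL lam N x.1 y : ℝ) : ℂ)‖) := by
  have hpos : ∀ k, 0 < lam k := fun k => hs.trans_le (hlb k)
  suffices h : HasSum (fun x : { x : Fin (N + 1) → ℕ // StrictMono x } =>
      frakP lam R γ (N + 1) (fun i => (i : ℕ)) x.1 * ((frakL lam N x.1 y : ℝ) : ℂ))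
      (frakP lam R γ N (fun i => (i : ℕ)) y) from ⟨h, h.summable.norm⟩
  set K : ℂ := ((hfun lam N y * (∏ i, (lam (y i))⁻¹) /
    hfun lam (N + 1) (fun i => (i : ℕ)) : ℝ) : ℂ) with hK
  have h := (hasSum_ite_interlace_det_eL hpos hub hR γ hy).mul_left K
  rw [← hasSum_subtype_iff_of_support_subset (s := {x | StrictMono x})] at h
  · convert! h using 1
    · ext ⟨x, hx⟩
      have hx0 := (hfun_pos hpos hx).ne'
      simp only [frakP, frakL, hK, Function.comp_apply]
      split_ifs
      · have hc : (hfun lam (N + 1) x : ℂ) ≠ 0 := by exact_mod_cast hx0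
        push_cast
        field_simp
      · simp
    · have h0 : ((∏ i : Fin N, (lam i : ℂ)⁻¹)) ≠ 0 :=
        prod_ne_zero_iff.mpr fun i _ => inv_ne_zero (by exact_mod_cast (hpos i).ne')
      have h1 : (∏ j, (lam (y j) : ℂ)) ≠ 0 :=
        prod_ne_zero_iff.mpr fun j _ => by exact_mod_cast (hpos (y j)).ne'
      simp only [frakP, hK, hfun_succ_val]
      push_cast
      rw [prod_inv_distrib (f := fun j => (lam (y j) : ℂ))]
      generalize (∏ i : Fin N, (lam i : ℂ)⁻¹) = P at h0 ⊢
      field_simp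
  · intro x hx
    by_contra hn
    refine hx ?_
    have : ¬ Interlace y x := fun hi => hn hi.strictMono
    simp [this]
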